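/- For every odd prime d, every two-qudit gate of the third level of the Clifford hierarchy is semi-Clifford: if G ∈ C_3^2, then there exist Clifford gates C₁, C₂ ∈ C_2^2 and a diagonal matrix D ∈ C_3^2 such that G = C₁ D C₂. -/

import Mathlib

open Matrix

noncomputable section

/-- The space of `n`-qudit gates: `d^n × d^n` complex matrices indexed by `(ZMod d)^n`. -/
abbrev Mat (d n : ℕ) := Matrix (Fin n → ZMod d) (Fin n → ZMod d) ℂ

/-- The primitive `d`-th root of unity `ω = exp(2πi/d)`. -/
def omega (d : ℕ) : ℂ := Complex.exp (2 * Real.pi * Complex.I / d)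

/-- `ω` raised to the canonical integer lift of `c : ZMod d`. -/
def omegaPow (d : ℕ) (c : ZMod d) : ℂ := omega d ^ c.val

/-- The Pauli gate `Z^p`, acting by `Z^p |z⟩ = ω^(p·z) |z⟩`. -/
def ZP (d n : ℕ) [NeZero d] (p : Fin n → ZMod d) : Mat d n :=
  Matrix.diagonal fun z => omegaPow d (p ⬝ᵥ z)

/-- The Pauli gate `X^q`, acting by `X^q |z⟩ = |z + q⟩`. -/
def XQ (d n : ℕ) [NeZero d] (q : Fin n → ZMod d) : Mat d n :=
  Matrix.of fun z' z => if z' = z + q then 1 else 0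

/-- The basic Pauli gate `Z_i`. -/
def Zi (d n : ℕ) [NeZero d] (i : Fin n) : Mat d n := ZP d n (Pi.single i 1)

/-- The basic Pauli gate `X_i`. -/
def Xi (d n : ℕ) [NeZero d] (i : Fin n) : Mat d n := XQ d n (Pi.single i 1)

/-- The Pauli group `C_1^n`. -/
def Pauli (d n : ℕ) [NeZero d] : Set (Mat d n) :=
  { M | ∃ (c : ZMod d) (p q : Fin n → ZMod d), M = omegaPow d c • (ZP d n p * XQ d n q) }

/-- The Clifford group `C_2^n`. -/
def Clifford (d n : ℕ) [NeZero d] : Set (Mat d n) :=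
  { C | C ∈ Matrix.unitaryGroup (Fin n → ZMod d) ℂ ∧ ∀ P ∈ Pauli d n, C * P * Cᴴ ∈ Pauli d n }

/-- The third level `C_3^n` of the Clifford hierarchy. -/
def Third (d n : ℕ) [NeZero d] : Set (Mat d n) :=
  { G | G ∈ Matrix.unitaryGroup (Fin n → ZMod d) ℂ ∧ ∀ P ∈ Pauli d n, G * P * Gᴴ ∈ Clifford d n }

/-- The quadratic diagonal gate `D_Φ |z⟩ = ω^(zᵀ Φ z) |z⟩`. -/
def quadGate (d n : ℕ) [NeZero d] (Φ : Matrix (Fin n) (Fin n) (ZMod d)) : Mat d n :=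
  Matrix.diagonal fun z => omegaPow d (z ⬝ᵥ (Φ *ᵥ z))

/-- A gate is semi-Clifford if it is `C₁ D C₂` for Cliffords `C₁, C₂` and a
diagonal third-level gate `D`. -/
def SemiClifford (d n : ℕ) [NeZero d] (G : Mat d n) : Prop :=
  ∃ C₁ ∈ Clifford d n, ∃ C₂ ∈ Clifford d n, ∃ D ∈ Third d n, D.IsDiag ∧ G = C₁ * D * C₂

/-- A Clifford gate is almost diagonal if it is `D_Φ P` for symmetric `Φ` and Pauli `P`. -/
def AlmostDiag (d n : ℕ) [NeZero d] (M : Mat d n) : Prop :=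
  ∃ Φ : Matrix (Fin n) (Fin n) (ZMod d), Φ.IsSymm ∧ ∃ P ∈ Pauli d n, M = quadGate d n Φ * P

/-- A third-level gate is simplified if its conjugate tuple consists of
almost diagonal Clifford gates. -/
def Simplified (d n : ℕ) [NeZero d] (G : Mat d n) : Prop :=
  ∀ i : Fin n, AlmostDiag d n (G * Zi d n i * Gᴴ) ∧ AlmostDiag d n (G * Xi d n i * Gᴴ)

/-- The symplectic product on `(ZMod d)⁴`. -/
def symp4 (d : ℕ) (u v : Fin 4 → ZMod d) : ZMod d :=
  u 0 * v 1 - u 1 * v 0 + u 2 * v 3 - u 3 * v 2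

/-!
Pauli gates are, up to phase, the Weyl operators of the symplectic space `V = (ZMod d)^(2n)`, and
a Clifford gate acts on them by conjugation through an isometry of `V`. For a third-level gate `G`,
the gates `G P G*` with `P` Pauli thus give a commutative `d`-group `H` of isometries of `V`. An
element of the kernel of `V → H` is a `v` for which `G` conjugates the Weyl operator of `v` to a
Pauli gate, and a fixed point of `H` is a `y` for which `G*` does so. These two sets are in
bijection, whence `|H| * |Fix H| ≥ d^(2n)`.

If `dim V = 4`, this bound forces `H` to fix a Lagrangian plane pointwise. As a `d`-group, `H`
fixes some `e ≠ 0` and, modulo `e`, some independent `f` orthogonal to `e`. If `f` is not fixed,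
then commutativity and `2 ≠ 0` give `|H| ≤ d^2`, so `e` is not, up to scalars, the only fixed
vector; every other one is orthogonal to `e`, which is a multiple of `h f - f` for some `h ∈ H`.

Finally, if `G*` conjugates the Weyl operators of a Lagrangian to Pauli gates, then by the
Stone–von Neumann theorem there are Clifford gates `W` and `U` carrying the gates `Z^p` to those
operators and to their conjugates. Hence `W* G U` commutes with every `Z^p`, so it is diagonal.
-/

section PGroupActions

variable {F G V : Type*} [Field F] [Group G] [AddCommGroup V] [Module F V]

theorem exists_ne_zero_forall_representation_apply_eq {p : ℕ} [Fact p.Prime] [CharP F p] [Finite V]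
    [Nontrivial V] (hG : IsPGroup p G) (ρ : Representation F G V) : ∃ v ≠ 0, ∀ g, ρ g v = v := by
  let _ : MulAction G V := MulAction.compHom V (ρ : G →* Module.End F V)
  have p_dvd_card : p ∣ Nat.card V := by
    obtain ⟨v, hv⟩ := exists_ne (0 : V)
    have nsmul_eq_zero : p • v = 0 := by
      rw [← Nat.cast_smul_eq_nsmul F, CharP.cast_eq_zero, zero_smul]
    exact addOrderOf_eq_prime nsmul_eq_zero hv ▸ addOrderOf_dvd_natCard v
  obtain ⟨v, hv, hv0⟩ := hG.exists_fixed_point_of_prime_dvd_card_of_fixed_point V p_dvd_card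
    (a := 0) fun g => map_zero (ρ g)
  exact ⟨v, hv0.symm, hv⟩

variable [DistribMulAction G V]

theorem index_stabilizer_le_card_of_smul_sub_mem_span [Finite F] {e x : V}
    (h : ∀ g : G, g • x - x ∈ F ∙ e) : (MulAction.stabilizer G x).index ≤ Nat.card F := by
  have orbit_subset : MulAction.orbit G x ⊆ Set.range fun a : F => a • e + x := by
    rintro _ ⟨g, rfl⟩
    obtain ⟨a, ha⟩ := Submodule.mem_span_singleton.1 (h g)
    exact ⟨a, sub_eq_iff_eq_add.1 ha.symm |>.symm⟩
  calc (MulAction.stabilizer G x).index = (MulAction.orbit G x).ncard :=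
        MulAction.index_stabilizer G x
    _ ≤ (Set.range fun a : F => a • e + x).ncard := Set.ncard_le_ncard orbit_subset
    _ ≤ Nat.card F := by
      rw [← Set.image_univ, ← Set.ncard_univ]
      exact Set.ncard_image_le

variable [SMulCommClass G F V]

theorem exists_mem_notMem_forall_smul_sub_mem {p : ℕ} [Fact p.Prime] [CharP F p] [Finite V]
    (hG : IsPGroup p G) {E E' : Submodule F V} (hE : ∀ (g : G), ∀ x ∈ E, g • x ∈ E)
    (hE' : ∀ (g : G), ∀ x ∈ E', g • x ∈ E') (hlt : E < E') :
    ∃ x ∈ E', x ∉ E ∧ ∀ g : G, g • x - x ∈ E := by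
  let ρ : Representation F G E' :=
    (Representation.ofDistribMulAction F G V).subrepresentation E' hE'
  let ρquot : Representation F G (E' ⧸ E.submoduleOf E') :=
    ρ.quotient (E.submoduleOf E') fun g x hx => hE g x hx
  have : Finite (E' ⧸ E.submoduleOf E') := Finite.of_surjective _ (Submodule.mkQ_surjective _)
  have : Nontrivial (E' ⧸ E.submoduleOf E') := by
    rw [Submodule.Quotient.nontrivial_iff, Ne, Submodule.submoduleOf_eq_top]
    exact hlt.not_ge
  obtain ⟨v, hv0, hv⟩ := exists_ne_zero_forall_representation_apply_eq hG ρquot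
  obtain ⟨x, rfl⟩ := Submodule.Quotient.mk_surjective _ v
  exact ⟨x, x.2, fun hx => hv0 ((Submodule.Quotient.mk_eq_zero _).2 hx),
    fun g => (Submodule.Quotient.eq (E.submoduleOf E')).1 (hv g)⟩

theorem smul_eq_of_mem_span_pair {g : G} {e f : V} (he : g • e = e) (hf : g • f = f) {x : V}
    (hx : x ∈ Submodule.span F {e, f}) : g • x = x := by
  obtain ⟨a, b, rfl⟩ := Submodule.mem_span_pair.1 hx
  rw [smul_add, smul_comm, he, smul_comm, hf]

end PGroupActions

section IsotropicFixedPairs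

open LinearMap Module

variable {F G V : Type*} [Field F] [Group G] [AddCommGroup V] [Module F V] [DistribMulAction G V]
  {B : LinearMap.BilinForm F V}

theorem mem_span_pair_of_apply_eq_zero (hB : B.IsAlt) (hnd : B.Nondegenerate)
    (hV : finrank F V = 4) {e f : V} (hef : LinearIndependent F ![e, f]) (hBef : B e f = 0) {x : V}
    (hex : B e x = 0) (hfx : B f x = 0) : x ∈ Submodule.span F {e, f} := by
  have : FiniteDimensional F V := FiniteDimensional.of_finrank_pos (by omega)
  set L := Submodule.span F {e, f} with hL
  have mem_orthogonal {y : V} (hey : B e y = 0) (hfy : B f y = 0) : y ∈ B.orthogonal L := by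
    rw [BilinForm.mem_orthogonal_iff]
    intro z hz
    obtain ⟨a, b, rfl⟩ := Submodule.mem_span_pair.1 hz
    simp [hey, hfy]
  have isotropic : L ≤ B.orthogonal L := by
    rw [hL, Submodule.span_le]
    rintro y (rfl | rfl)
    · exact mem_orthogonal (hB _) (by rw [← hB.neg_eq, hBef, neg_zero])
    · exact mem_orthogonal hBef (hB _)
  have finrank_L : finrank F L = 2 := by
    rw [hL, ← Matrix.range_cons_cons_empty e f ![], finrank_span_eq_card hef, Fintype.card_fin]
  have lagrangian : L = B.orthogonal L := Submodule.eq_of_le_of_finrank_eq isotropic (by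
    rw [BilinForm.finrank_orthogonal hnd, hV, finrank_L])
  exact lagrangian ▸ mem_orthogonal hex hfx

/-- `B` is a symplectic form (alternating and nondegenerate) preserved by the action of `G`. -/
structure IsInvariantSymplectic (G : Type*) [Group G] [DistribMulAction G V]
    (B : LinearMap.BilinForm F V) : Prop where
  isAlt : B.IsAlt
  nondegenerate : B.Nondegenerate
  apply_smul_smul (g : G) (x y : V) : B (g • x) (g • y) = B x y

namespace IsInvariantSymplectic

theorem apply_smul_sub_eq_zero (hB : IsInvariantSymplectic G B) {g : G} {x : V} (hx : g • x = x)
    (y : V) : B x (g • y - y) = 0 := by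
  have invariance := hB.apply_smul_smul g x y
  rw [hx] at invariance
  rw [map_sub, invariance, sub_self]

variable {e f : V} {g h : G}

theorem apply_smul_sub_ne_zero (hB : IsInvariantSymplectic G B) (he : g • e = e)
    (hgf : g • f - f ∈ F ∙ e) (hgf0 : g • f ≠ f) {e' : V} (hBee' : B e e' ≠ 0) :
    B f (g • e' - e') ≠ 0 := by
  obtain ⟨c, hc⟩ := Submodule.mem_span_singleton.1 hgf
  have c_ne_zero : c ≠ 0 := by
    rintro rfl
    exact hgf0 (sub_eq_zero.1 (by rw [← hc, zero_smul]))
  have apply_ge' : B e (g • e') = B e e' := by simpa only [he] using hB.apply_smul_smul g e e'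
  have invariance := hB.apply_smul_smul g f e'
  rw [← sub_add_cancel (g • f) f, ← hc, map_add, LinearMap.add_apply, LinearMap.map_smul,
    LinearMap.smul_apply, apply_ge', smul_eq_mul] at invariance
  have apply_eq : B f (g • e' - e') = -(c * B e e') := by
    rw [map_sub]
    linear_combination invariance
  rw [apply_eq]
  exact neg_ne_zero.2 (mul_ne_zero c_ne_zero hBee')

theorem smul_sub_mem_span_pair (hB : IsInvariantSymplectic G B) (hV : finrank F V = 4)
    (hef : LinearIndependent F ![e, f]) (hBef : B e f = 0) (he : h • e = e) (hf : h • f = f)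
    (x : V) : h • x - x ∈ Submodule.span F {e, f} :=
  mem_span_pair_of_apply_eq_zero hB.isAlt hB.nondegenerate hV hef hBef
    (hB.apply_smul_sub_eq_zero he x) (hB.apply_smul_sub_eq_zero hf x)

theorem smul_smul_sub_mem_span_pair (hB : IsInvariantSymplectic G B) (hV : finrank F V = 4)
    (hef : LinearIndependent F ![e, f]) (hBef : B e f = 0) (he : g • e = e)
    (hgf : g • f - f ∈ F ∙ e) {x : V} (hx : B e x = 0) :
    g • x - x ∈ Submodule.span F {e, f} := by
  refine mem_span_pair_of_apply_eq_zero hB.isAlt hB.nondegenerate hV hef hBef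
    (hB.apply_smul_sub_eq_zero he x) ?_
  obtain ⟨c, hc⟩ := Submodule.mem_span_singleton.1 hgf
  have apply_gx : B e (g • x) = 0 := by simpa only [he, hx] using hB.apply_smul_smul g e x
  have smul_f : g • f = c • e + f := by rw [hc, sub_add_cancel]
  have invariance := hB.apply_smul_smul g f x
  simp only [smul_f, map_add, LinearMap.add_apply, LinearMap.map_smul, LinearMap.smul_apply,
    apply_gx, smul_zero, zero_add] at invariance
  rw [map_sub, invariance, sub_self]

theorem eq_one_of_smul_eq [IsMulCommutative G] [FaithfulSMul G V]
    (hB : IsInvariantSymplectic G B) (hV : finrank F V = 4)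
    (hef : LinearIndependent F ![e, f]) (hBef : B e f = 0) (he : ∀ g : G, g • e = e)
    (hgf : g • f - f ∈ F ∙ e) (hgf0 : g • f ≠ f) (hf : h • f = f)
    {e' : V} (hBee' : B e e' ≠ 0) (he' : h • e' = e') : h = 1 := by
  refine eq_of_smul_eq_smul fun x : V => ?_
  rw [one_smul, ← sub_eq_zero]
  set f' := g • e' - e'
  have hf' : h • f' = f' := by rw [smul_sub, smul_smul, mul_comm', ← smul_smul, he']
  obtain ⟨a, b, hab⟩ := Submodule.mem_span_pair.1
    (hB.smul_sub_mem_span_pair hV hef hBef (he h) hf x)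
  have orthogonal_e' := hB.isAlt.neg_eq (h • x - x) e' ▸ hB.apply_smul_sub_eq_zero he' x
  have orthogonal_f' := hB.isAlt.neg_eq (h • x - x) f' ▸ hB.apply_smul_sub_eq_zero hf' x
  have apply_e_f' : B e f' = 0 := hB.apply_smul_sub_eq_zero (he g) e'
  have apply_f_f' : B f f' ≠ 0 := hB.apply_smul_sub_ne_zero (he g) hgf hgf0 hBee'
  simp only [← hab, map_add, LinearMap.add_apply, LinearMap.map_smul, LinearMap.smul_apply,
    smul_eq_mul, neg_eq_zero, apply_e_f', mul_zero, zero_add] at orthogonal_e' orthogonal_f'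
  obtain rfl : b = 0 := (mul_eq_zero.1 orthogonal_f').resolve_right apply_f_f'
  obtain rfl : a = 0 := by simpa [hBee'] using orthogonal_e'
  rw [← hab, zero_smul, zero_smul, add_zero]

variable [SMulCommClass G F V]

theorem apply_smul_sub_comm (hB : IsInvariantSymplectic G B) (hV : finrank F V = 4)
    (hef : LinearIndependent F ![e, f]) (hBef : B e f = 0) (he : h • e = e) (hf : h • f = f)
    (x y : V) : B (h • x - x) y = B (h • y - y) x := by
  have smul_fixed := smul_eq_of_mem_span_pair he hf
    (hB.smul_sub_mem_span_pair hV hef hBef he hf x)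
  have orthogonal := hB.apply_smul_sub_eq_zero smul_fixed y
  have invariance := hB.apply_smul_smul h x y
  have swap := hB.isAlt.neg_eq (h • y - y) x
  simp only [map_sub, LinearMap.sub_apply] at orthogonal swap ⊢
  linear_combination invariance - orthogonal + swap

-- `(x, y) ↦ B (h • x - x) y` is a symmetric form with radical containing `e` and `f`; it is
-- `g`-invariant because `g` and `h` commute.
theorem apply_smul_sub_smul_sub_eq_zero [IsMulCommutative G] (hB : IsInvariantSymplectic G B)
    (h2 : (2 : F) ≠ 0) (hV : finrank F V = 4) (hef : LinearIndependent F ![e, f])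
    (hBef : B e f = 0) (he : ∀ g : G, g • e = e) (hf : h • f = f)
    (hgf : g • f - f ∈ F ∙ e) (x : V) : B (h • x - x) (g • x - x) = 0 := by
  have symm := hB.apply_smul_sub_comm hV hef hBef (he h) hf
  have invariance (y z : V) : B (h • g • y - g • y) (g • z) = B (h • y - y) z := by
    rw [smul_smul, mul_comm', ← smul_smul, ← smul_sub, hB.apply_smul_smul]
  obtain ⟨x', hx'⟩ : ∃ x', g • x = x + x' := ⟨g • x - x, by abel⟩
  have apply_x' : B e x' = 0 := by
    simpa only [hx', add_sub_cancel_left] using hB.apply_smul_sub_eq_zero (he g) x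
  obtain ⟨l, hl⟩ : ∃ l, g • x' = x' + l := ⟨g • x' - x', by abel⟩
  have radical (y : V) : B (h • y - y) l = 0 := by
    have l_mem := hB.smul_smul_sub_mem_span_pair hV hef hBef (he g) hgf apply_x'
    rw [hl, add_sub_cancel_left] at l_mem
    rw [symm, smul_eq_of_mem_span_pair (he h) hf l_mem, sub_self, map_zero, LinearMap.zero_apply]
  have apply_x_x' := invariance x x'
  have apply_x_x := invariance x x
  have symm_x_x' := symm x x'
  have radical_x := radical x
  have radical_x' := radical x'
  rw [hx', add_sub_cancel_left]
  simp only [hx', hl, smul_add, map_add, map_sub, LinearMap.add_apply, LinearMap.sub_apply]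
    at apply_x_x' apply_x_x symm_x_x' radical_x radical_x' ⊢
  refine (mul_eq_zero.1 (?_ : (2 : F) * _ = 0)).resolve_left h2
  linear_combination apply_x_x - apply_x_x' + symm_x_x' + radical_x + radical_x'

theorem smul_sub_mem_span_of_smul_eq [IsMulCommutative G] (hB : IsInvariantSymplectic G B)
    (h2 : (2 : F) ≠ 0) (hV : finrank F V = 4) (hef : LinearIndependent F ![e, f])
    (hBef : B e f = 0) (he : ∀ g : G, g • e = e) (hgf : g • f - f ∈ F ∙ e) (hgf0 : g • f ≠ f)
    (hf : h • f = f) {e' : V} (hBee' : B e e' ≠ 0) : h • e' - e' ∈ F ∙ e := by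
  obtain ⟨a, b, hab⟩ := Submodule.mem_span_pair.1
    (hB.smul_sub_mem_span_pair hV hef hBef (he h) hf e')
  have orthogonal := hB.apply_smul_sub_smul_sub_eq_zero h2 hV hef hBef he hf hgf e'
  rw [← hab, map_add, LinearMap.add_apply, LinearMap.map_smul, LinearMap.smul_apply,
    hB.apply_smul_sub_eq_zero (he g), smul_zero, zero_add, LinearMap.map_smul,
    LinearMap.smul_apply, smul_eq_mul] at orthogonal
  have b_eq_zero : b = 0 := (mul_eq_zero.1 orthogonal).resolve_right
    (hB.apply_smul_sub_ne_zero (he g) hgf hgf0 hBee')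
  rw [← hab, b_eq_zero, zero_smul, add_zero]
  exact Submodule.smul_mem _ _ (Submodule.mem_span_singleton_self e)

theorem card_le_of_smul_ne [Finite F] [IsMulCommutative G] [FaithfulSMul G V]
    (hB : IsInvariantSymplectic G B) (h2 : (2 : F) ≠ 0) (hV : finrank F V = 4)
    (hef : LinearIndependent F ![e, f]) (hBef : B e f = 0) (he : ∀ g : G, g • e = e)
    (hGf : ∀ g : G, g • f - f ∈ F ∙ e) (hgf0 : g • f ≠ f) : Nat.card G ≤ Nat.card F ^ 2 := by
  obtain ⟨e', hBee'⟩ : ∃ e', B e e' ≠ 0 := by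
    by_contra! apply_e
    exact hef.ne_zero 0 (hB.nondegenerate.1 e apply_e)
  let H := MulAction.stabilizer G f
  have stabilizer_eq_bot : MulAction.stabilizer H e' = ⊥ := (Subgroup.eq_bot_iff_forall _).2
    fun h he' => Subtype.ext <| hB.eq_one_of_smul_eq hV hef hBef he (hGf g) hgf0 h.2 hBee' he'
  have card_H_le : Nat.card H ≤ Nat.card F := by
    rw [← Subgroup.index_bot, ← stabilizer_eq_bot]
    exact index_stabilizer_le_card_of_smul_sub_mem_span fun h =>
      hB.smul_sub_mem_span_of_smul_eq h2 hV hef hBef he (hGf g) hgf0 h.2 hBee'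
  calc Nat.card G = Nat.card H * H.index := (Subgroup.card_mul_index H).symm
    _ ≤ Nat.card F * Nat.card F :=
      Nat.mul_le_mul card_H_le (index_stabilizer_le_card_of_smul_sub_mem_span hGf)
    _ = Nat.card F ^ 2 := (sq _).symm

variable {p : ℕ} [Fact p.Prime] [CharP F p] [Finite F]

theorem exists_invariant_flag (hB : IsInvariantSymplectic G B) (hV : finrank F V = 4)
    (hG : IsPGroup p G) : ∃ e f : V, (∀ g : G, g • e = e) ∧ (∀ g : G, g • f - f ∈ F ∙ e) ∧
      LinearIndependent F ![e, f] ∧ B e f = 0 := by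
  have : FiniteDimensional F V := FiniteDimensional.of_finrank_pos (by omega)
  have : Finite V := Module.finite_of_finite F
  have : Nontrivial V := Module.nontrivial_of_finrank_pos (R := F) (by omega)
  obtain ⟨e, he0, he⟩ : ∃ e : V, e ≠ 0 ∧ ∀ g : G, g • e = e :=
    exists_ne_zero_forall_representation_apply_eq hG (Representation.ofDistribMulAction F G V)
  have mem_orthogonal {x : V} : x ∈ B.orthogonal (F ∙ e) ↔ B e x = 0 := by
    rw [BilinForm.mem_orthogonal_iff]
    refine ⟨fun h => h e (Submodule.mem_span_singleton_self e), fun h y hy => ?_⟩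
    obtain ⟨a, rfl⟩ := Submodule.mem_span_singleton.1 hy
    rw [LinearMap.map_smul, LinearMap.smul_apply, h, smul_zero]
  have le_orthogonal : F ∙ e ≤ B.orthogonal (F ∙ e) := by
    rw [Submodule.span_singleton_le_iff_mem, mem_orthogonal]
    exact hB.isAlt e
  have ne_orthogonal : F ∙ e ≠ B.orthogonal (F ∙ e) := fun h => by
    have := congrArg (fun W : Submodule F V => finrank F W) h
    simp only [BilinForm.finrank_orthogonal hB.nondegenerate, finrank_span_singleton he0,
      hV] at this
    omega
  obtain ⟨f, hf, hfe, hGf⟩ := exists_mem_notMem_forall_smul_sub_mem hG (E := F ∙ e)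
    (E' := B.orthogonal (F ∙ e))
    (fun g x hx => by
      obtain ⟨a, rfl⟩ := Submodule.mem_span_singleton.1 hx
      rw [smul_comm, he g]
      exact hx)
    (fun g x hx => by
      rw [mem_orthogonal] at hx ⊢
      rw [← he g, hB.apply_smul_smul, hx])
    (lt_of_le_of_ne le_orthogonal ne_orthogonal)
  refine ⟨e, f, he, hGf, (LinearIndependent.pair_iff' he0).2 fun a ha => hfe ?_,
    mem_orthogonal.1 hf⟩
  exact Submodule.mem_span_singleton.2 ⟨a, ha⟩

theorem exists_isotropic_fixed_pair [IsMulCommutative G] [FaithfulSMul G V]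
    (hB : IsInvariantSymplectic G B) (h2 : (2 : F) ≠ 0) (hV : finrank F V = 4) (hG : IsPGroup p G)
    (hcard : Nat.card F ^ 4 ≤ Nat.card G * Nat.card (MulAction.fixedPoints G V)) :
    ∃ x ∈ MulAction.fixedPoints G V, ∃ y ∈ MulAction.fixedPoints G V,
      LinearIndependent F ![x, y] ∧ B x y = 0 := by
  obtain ⟨e, f, he, hGf, hef, hBef⟩ := hB.exists_invariant_flag hV hG
  by_cases hf : ∀ g : G, g • f = f
  · exact ⟨e, he, f, hf, hef, hBef⟩
  obtain ⟨g, hgf⟩ := not_forall.1 hf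
  have card_G_le := hB.card_le_of_smul_ne h2 hV hef hBef he hGf hgf
  have he0 : e ≠ 0 := hef.ne_zero 0
  obtain ⟨x, hx, hxe⟩ : ∃ x ∈ MulAction.fixedPoints G V, x ∉ F ∙ e := by
    by_contra! fixed_subset
    have card_fixed_le : Nat.card (MulAction.fixedPoints G V) ≤ Nat.card F := by
      have : FiniteDimensional F V := FiniteDimensional.of_finrank_pos (by omega)
      have : Finite V := Module.finite_of_finite F
      calc _ ≤ Nat.card (F ∙ e) := Nat.card_mono (Set.toFinite _) fixed_subset
        _ = Nat.card F := by
          rw [Module.natCard_eq_pow_finrank (K := F), finrank_span_singleton he0, pow_one]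
    have one_lt_card : 1 < Nat.card F := Finite.one_lt_card
    have := hcard.trans (Nat.mul_le_mul card_G_le card_fixed_le)
    rw [← pow_succ] at this
    exact absurd ((Nat.pow_le_pow_iff_right one_lt_card).1 this) (by norm_num)
  refine ⟨e, he, x, hx, (LinearIndependent.pair_iff' he0).2 fun a ha =>
    hxe (Submodule.mem_span_singleton.2 ⟨a, ha⟩), ?_⟩
  obtain ⟨c, hc⟩ := Submodule.mem_span_singleton.1 (hGf g)
  have c_ne_zero : c ≠ 0 := by
    rintro rfl
    exact hgf (sub_eq_zero.1 (by rw [← hc, zero_smul]))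
  have orthogonal := hB.apply_smul_sub_eq_zero (hx g) f
  rw [← hc, LinearMap.map_smul, smul_eq_mul] at orthogonal
  rw [← hB.isAlt.neg_eq, (mul_eq_zero.1 orthogonal).resolve_left c_ne_zero, neg_zero]

end IsInvariantSymplectic

end IsotropicFixedPairs

section PhaseSpace

/-- The phase space of `n` qudits: `(p, q)` labels the Pauli gate `Z^p X^q` up to phase. -/
abbrev PhaseSpace (d n : ℕ) := (Fin n → ZMod d) × (Fin n → ZMod d)

/-- The standard symplectic form on phase space, which measures the failure of Pauli gates to
commute. -/
def sympForm (d n : ℕ) : LinearMap.BilinForm (ZMod d) (PhaseSpace d n) :=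
  LinearMap.mk₂ (ZMod d) (fun v w => v.1 ⬝ᵥ w.2 - w.1 ⬝ᵥ v.2)
    (fun _ _ _ => by simp only [Prod.fst_add, Prod.snd_add, add_dotProduct, dotProduct_add]; ring)
    (fun _ _ _ => by simp [mul_sub])
    (fun _ _ _ => by simp only [Prod.fst_add, Prod.snd_add, add_dotProduct, dotProduct_add]; ring)
    (fun _ _ _ => by simp [mul_sub])

variable {d n : ℕ}

theorem sympForm_apply (v w : PhaseSpace d n) : sympForm d n v w = v.1 ⬝ᵥ w.2 - w.1 ⬝ᵥ v.2 := rfl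

theorem isAlt_sympForm : (sympForm d n).IsAlt := fun v => by simp [sympForm_apply]

theorem sympForm_nondegenerate : (sympForm d n).Nondegenerate := by
  have isRefl : (sympForm d n).IsRefl := LinearMap.BilinForm.IsAlt.isRefl isAlt_sympForm
  refine isRefl.nondegenerate_iff_separatingLeft.2 fun v hv => ?_
  ext i
  · simpa [sympForm_apply] using hv (0, Pi.single i 1)
  · simpa [sympForm_apply] using hv (Pi.single i 1, 0)

variable [Fact d.Prime] {V : Type*} [AddCommGroup V] [Module (ZMod d) V]

theorem injective_of_apply_eq_sympForm {B : LinearMap.BilinForm (ZMod d) V}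
    {g : PhaseSpace d n →ₗ[ZMod d] V} (hg : ∀ v w, B (g v) (g w) = sympForm d n v w) :
    Function.Injective g := by
  refine (injective_iff_map_eq_zero g).2 fun v hv => sympForm_nondegenerate.1 v fun w => ?_
  rw [← hg, hv, map_zero, LinearMap.zero_apply]

theorem finrank_phaseSpace : Module.finrank (ZMod d) (PhaseSpace d n) = 2 * n := by
  simp [two_mul]

theorem exists_isometry_extending_isotropic [NeZero (2 : ZMod d)] [FiniteDimensional (ZMod d) V]
    {B : LinearMap.BilinForm (ZMod d) V} (hB : B.IsAlt) (hnd : B.Nondegenerate)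
    {ι : (Fin n → ZMod d) →ₗ[ZMod d] V} (hι : Function.Injective ι)
    (hιB : ∀ p p', B (ι p) (ι p') = 0) :
    ∃ g : PhaseSpace d n →ₗ[ZMod d] V,
      (∀ v w, B (g v) (g w) = sympForm d n v w) ∧ ∀ p, g (p, 0) = ι p := by
  obtain ⟨r, hr⟩ := LinearMap.exists_leftInverse_of_injective ι (LinearMap.ker_eq_bot.2 hι)
  -- `s` is dual to `ι`, but its range need not be isotropic; subtracting `2⁻¹ • ι ∘ r ∘ s` repairs
  -- this.
  obtain ⟨s, hs⟩ : ∃ s : (Fin n → ZMod d) →ₗ[ZMod d] V, ∀ x q, B x (s q) = r x ⬝ᵥ q := by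
    refine ⟨-(B.toDual hnd).symm.toLinearMap ∘ₗ
      (dotProductBilin (ZMod d) (ZMod d)).compl₂ r, fun x q => ?_⟩
    simp [← hB.neg_eq _ x, dotProduct_comm]
  have hrι (p) : r (ι p) = p := LinearMap.congr_fun hr p
  refine ⟨ι.coprod (s - (2 : ZMod d)⁻¹ • ι ∘ₗ r ∘ₗ s), fun v w => ?_, fun p => by simp⟩
  have hsι (p q) : B (s q) (ι p) = -(p ⬝ᵥ q) := by rw [← hB.neg_eq, hs, hrι]
  have swap := hB.neg_eq (s v.2) (s w.2)
  simp only [LinearMap.coprod_apply, LinearMap.sub_apply, LinearMap.smul_apply,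
    LinearMap.comp_apply, map_add, map_sub, map_smul, LinearMap.add_apply, hιB, hs, hsι, hrι,
    sympForm_apply, smul_eq_mul] at swap ⊢
  field_simp
  linear_combination -2 * swap

end PhaseSpace

section UnitaryConjugation

variable {m : Type*} [Fintype m] [DecidableEq m]

/-- Conjugation by a unitary matrix. -/
abbrev unitaryConj (U : unitaryGroup m ℂ) : Matrix m m ℂ ≃⋆ₐ[ℂ] Matrix m m ℂ :=
  Unitary.conjStarAlgAut ℂ (Matrix m m ℂ) U

theorem unitaryConj_symm (U : unitaryGroup m ℂ) : (unitaryConj U).symm = unitaryConj (star U) :=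
  Unitary.conjStarAlgAut_symm U

theorem unitaryConj_mul_apply (U V : unitaryGroup m ℂ) (M : Matrix m m ℂ) :
    unitaryConj (U * V) M = unitaryConj U (unitaryConj V M) :=
  Unitary.conjStarAlgAut_mul_apply U V M

theorem unitaryConj_mul_self (U : unitaryGroup m ℂ) (M : Matrix m m ℂ) :
    unitaryConj U M * U = U * M := by
  rw [Unitary.conjStarAlgAut_apply, mul_assoc, Unitary.coe_star_mul_self, mul_one]

theorem exists_unitaryConj_eq (f : Matrix m m ℂ ≃⋆ₐ[ℂ] Matrix m m ℂ) :
    ∃ U : unitaryGroup m ℂ, unitaryConj U = f := by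
  let Φ := toEuclideanCLM (n := m) (𝕜 := ℂ)
  obtain ⟨V, hV⟩ := StarAlgEquiv.eq_linearIsometryEquivConjStarAlgEquiv
    (Φ.symm.trans (f.trans Φ)) (LinearMap.continuous_of_finiteDimensional
      (Φ.symm.trans (f.trans Φ)).toAlgEquiv.toLinearMap)
  obtain ⟨u, rfl⟩ := Unitary.linearIsometryEquiv.surjective V
  refine ⟨⟨Φ.symm u, Unitary.map_mem Φ.symm u.2⟩, StarAlgEquiv.ext fun M => Φ.injective ?_⟩
  calc Φ (Φ.symm u * M * star (Φ.symm u))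
      = Unitary.conjStarAlgAut ℂ _ u (Φ M) := by
        rw [map_mul, map_mul, map_star, Φ.apply_symm_apply, Unitary.conjStarAlgAut_apply]
    _ = (Φ.symm.trans (f.trans Φ)) (Φ M) := by
        rw [hV, Unitary.conjStarAlgEquiv_unitaryLinearIsometryEquiv]
    _ = Φ (f M) := by simp

end UnitaryConjugation

section Characters

open ZMod (stdAddChar)

variable {d : ℕ} [NeZero d]

theorem stdAddChar_natCast_eq_omega_pow (k : ℕ) : (stdAddChar (k : ZMod d) : ℂ) = omega d ^ k := by
  rw [omega, ← Complex.exp_nat_mul, ← Int.cast_natCast (R := ZMod d), ZMod.stdAddChar_coe]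
  congr 1
  push_cast
  ring

theorem omegaPow_eq_stdAddChar (c : ZMod d) : omegaPow d c = stdAddChar c := by
  rw [omegaPow, ← stdAddChar_natCast_eq_omega_pow, ZMod.natCast_zmod_val]

theorem exists_stdAddChar_eq_of_pow_eq_one {z : ℂ} (hz : z ^ d = 1) :
    ∃ c : ZMod d, stdAddChar c = z := by
  obtain ⟨k, -, rfl⟩ := (Complex.isPrimitiveRoot_exp d (NeZero.ne d)).eq_pow_of_pow_eq_one hz
  exact ⟨k, stdAddChar_natCast_eq_omega_pow k⟩

theorem star_stdAddChar (c : ZMod d) : star (stdAddChar c : ℂ) = stdAddChar (-c) :=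
  (AddChar.map_neg_eq_conj stdAddChar c).symm

theorem stdAddChar_ne_zero (c : ZMod d) : (stdAddChar c : ℂ) ≠ 0 :=
  (stdAddChar.val_isUnit c).ne_zero

end Characters

section Weyl

open ZMod (stdAddChar)

variable {d n : ℕ} [NeZero d]

/-- The Weyl operator of a point of phase space: the Pauli gate `Z^p X^q`, with the phase chosen
so that, for odd `d`, `weyl (-v)` is inverse to `weyl v`. -/
def weyl (v : PhaseSpace d n) : Mat d n :=
  (stdAddChar (-(2⁻¹ * v.1 ⬝ᵥ v.2)) : ℂ) • (ZP d n v.1 * XQ d n v.2)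

theorem mem_pauli_iff {M : Mat d n} :
    M ∈ Pauli d n ↔ ∃ (c : ZMod d) (v : PhaseSpace d n), M = (stdAddChar c : ℂ) • weyl v := by
  constructor
  · rintro ⟨c, p, q, rfl⟩
    refine ⟨c + 2⁻¹ * p ⬝ᵥ q, (p, q), ?_⟩
    rw [weyl, smul_smul, ← AddChar.map_add_eq_mul, omegaPow_eq_stdAddChar, add_neg_cancel_right]
  · rintro ⟨c, v, rfl⟩
    refine ⟨c - 2⁻¹ * v.1 ⬝ᵥ v.2, v.1, v.2, ?_⟩
    rw [weyl, smul_smul, ← AddChar.map_add_eq_mul, omegaPow_eq_stdAddChar, sub_eq_add_neg]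

theorem stdAddChar_smul_weyl_mem_pauli (c : ZMod d) (v : PhaseSpace d n) :
    (stdAddChar c : ℂ) • weyl v ∈ Pauli d n :=
  mem_pauli_iff.2 ⟨c, v, rfl⟩

theorem weyl_mem_pauli (v : PhaseSpace d n) : weyl v ∈ Pauli d n :=
  mem_pauli_iff.2 ⟨0, v, by rw [AddChar.map_zero_eq_one, one_smul]⟩

theorem weyl_apply (v : PhaseSpace d n) (i j : Fin n → ZMod d) :
    weyl v i j = if i = j + v.2 then stdAddChar (v.1 ⬝ᵥ i - 2⁻¹ * v.1 ⬝ᵥ v.2) else 0 := by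
  rw [weyl, Matrix.smul_apply, ZP, XQ, diagonal_mul, of_apply, omegaPow_eq_stdAddChar, smul_eq_mul,
    mul_left_comm, mul_ite, mul_one, mul_zero, mul_ite, mul_zero, ← AddChar.map_add_eq_mul,
    ← sub_eq_add_neg]

theorem weyl_zero : weyl (0 : PhaseSpace d n) = 1 := by
  ext i j
  simp [weyl_apply, one_apply]

theorem isDiag_of_commute_weyl {M : Mat d n}
    (hM : ∀ p, Commute M (weyl (p, 0))) : M.IsDiag := by
  have weyl_eq (p : Fin n → ZMod d) : weyl (p, 0) = diagonal fun z => stdAddChar (p ⬝ᵥ z) := by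
    ext i j
    simp [weyl_apply, diagonal_apply]
  intro i j hij
  obtain ⟨k, hk⟩ := Function.ne_iff.1 hij
  have entry := congrFun (congrFun (hM (Pi.single k 1)) i) j
  rw [weyl_eq, mul_diagonal, diagonal_mul, mul_comm] at entry
  by_contra hne
  exact hk (by simpa using (ZMod.injective_stdAddChar (mul_right_cancel₀ hne entry)).symm)

end Weyl

section WeylRelations

open ZMod (stdAddChar)

variable {d n : ℕ} [Fact d.Prime] [NeZero (2 : ZMod d)]

theorem weyl_mul_weyl (v w : PhaseSpace d n) :
    weyl v * weyl w = (stdAddChar (2⁻¹ * sympForm d n v w) : ℂ) • weyl (v + w) := by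
  ext i j
  have reindex : i = j + w.2 + v.2 ↔ i = j + (v + w).2 := by
    rw [Prod.snd_add, add_comm v.2, add_assoc]
  rw [mul_apply, Finset.sum_eq_single_of_mem (j + w.2) (Finset.mem_univ _)
    fun k _ hk => by rw [weyl_apply w, if_neg hk, mul_zero]]
  simp only [Matrix.smul_apply, weyl_apply, reindex, if_true, smul_eq_mul, mul_ite, mul_zero,
    ite_mul, zero_mul, ← AddChar.map_add_eq_mul]
  split_ifs with hi
  · rw [hi]
    congr 1
    simp only [sympForm_apply, Prod.fst_add, Prod.snd_add, add_dotProduct, dotProduct_add]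
    field_simp
    ring
  · rfl

theorem weyl_mul_weyl_neg (v : PhaseSpace d n) : weyl v * weyl (-v) = 1 := by
  rw [weyl_mul_weyl, map_neg, isAlt_sympForm, neg_zero, mul_zero, AddChar.map_zero_eq_one,
    one_smul, add_neg_cancel, weyl_zero]

theorem weyl_neg_mul_weyl (v : PhaseSpace d n) : weyl (-v) * weyl v = 1 := by
  simpa using weyl_mul_weyl_neg (-v)

theorem isUnit_weyl (v : PhaseSpace d n) : IsUnit (weyl v) :=
  ⟨⟨weyl v, weyl (-v), weyl_mul_weyl_neg v, weyl_neg_mul_weyl v⟩, rfl⟩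

theorem star_weyl (v : PhaseSpace d n) : star (weyl v) = weyl (-v) := by
  ext i j
  have reindex : j = i + v.2 ↔ i = j + (-v).2 := by
    rw [Prod.snd_neg, ← sub_eq_add_neg, eq_sub_iff_add_eq, eq_comm]
  rw [star_apply, weyl_apply, weyl_apply, apply_ite star, star_zero, star_stdAddChar]
  simp only [reindex]
  split_ifs with hi
  · rw [hi]
    congr 1
    simp only [Prod.fst_neg, Prod.snd_neg, neg_dotProduct, dotProduct_neg, dotProduct_add]
    field_simp
    ring
  · rfl

theorem weyl_mul_weyl_comm (v w : PhaseSpace d n) :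
    weyl v * weyl w = (stdAddChar (sympForm d n v w) : ℂ) • (weyl w * weyl v) := by
  rw [weyl_mul_weyl, weyl_mul_weyl, smul_smul, ← AddChar.map_add_eq_mul, add_comm w v,
    ← isAlt_sympForm.neg_eq v w]
  congr 2
  field_simp
  ring

theorem weyl_pow (v : PhaseSpace d n) (k : ℕ) : weyl v ^ k = weyl (k • v) := by
  induction k with
  | zero => rw [pow_zero, zero_smul, weyl_zero]
  | succ k ih =>
    rw [pow_succ, ih, weyl_mul_weyl, map_nsmul, LinearMap.smul_apply, isAlt_sympForm, smul_zero,
      mul_zero, AddChar.map_zero_eq_one, one_smul, succ_nsmul]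

theorem weyl_pow_card (v : PhaseSpace d n) : weyl v ^ d = 1 := by
  rw [weyl_pow, ← Nat.cast_smul_eq_nsmul (ZMod d), CharP.cast_eq_zero, zero_smul, weyl_zero]

theorem trace_weyl_of_ne_zero {v : PhaseSpace d n} (hv : v ≠ 0) : (weyl v).trace = 0 := by
  obtain ⟨w, hw⟩ : ∃ w, sympForm d n v w ≠ 0 := by
    by_contra! h
    exact hv (sympForm_nondegenerate.1 v h)
  have trace_eq : (weyl v).trace = stdAddChar (sympForm d n v w) * (weyl v).trace := by
    calc (weyl v).trace = (weyl v * weyl w * weyl (-w)).trace := by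
          rw [mul_assoc, weyl_mul_weyl_neg, mul_one]
      _ = stdAddChar (sympForm d n v w) * (weyl w * weyl v * weyl (-w)).trace := by
          rw [weyl_mul_weyl_comm, smul_mul_assoc, trace_smul, smul_eq_mul]
      _ = stdAddChar (sympForm d n v w) * (weyl v).trace := by
          rw [trace_mul_comm, ← mul_assoc, weyl_neg_mul_weyl, one_mul]
  by_contra hne
  refine hw (ZMod.injective_stdAddChar ?_)
  rw [AddChar.map_zero_eq_one, ← mul_right_cancel₀ hne ((one_mul _).trans trace_eq)]

end WeylRelations

section WeylBasis

open ZMod (stdAddChar)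

variable {d n : ℕ} [Fact d.Prime] [NeZero (2 : ZMod d)]

theorem trace_weyl_mul_weyl_neg (v w : PhaseSpace d n) :
    (weyl v * weyl (-w)).trace = if v = w then (d ^ n : ℂ) else 0 := by
  split_ifs with h
  · rw [h, weyl_mul_weyl_neg]
    simp
  · rw [weyl_mul_weyl, trace_smul, ← sub_eq_add_neg, trace_weyl_of_ne_zero (sub_ne_zero.2 h),
      smul_zero]

theorem linearIndependent_weyl : LinearIndependent ℂ (weyl : PhaseSpace d n → Mat d n) := by
  refine Fintype.linearIndependent_iff.2 fun a ha w => ?_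
  have coeff : (∑ v, a v • weyl v * weyl (-w)).trace = a w * (d ^ n : ℂ) := by
    simp [trace_sum, trace_smul, trace_weyl_mul_weyl_neg]
  rw [← Finset.sum_mul, ha, zero_mul, trace_zero] at coeff
  exact (mul_eq_zero.1 coeff.symm).resolve_right (by simp [NeZero.ne d])

/-- The Weyl operators as a basis of the space of gates. -/
def weylBasis (d n : ℕ) [Fact d.Prime] [NeZero (2 : ZMod d)] :
    Module.Basis (PhaseSpace d n) ℂ (Mat d n) :=
  basisOfLinearIndependentOfCardEqFinrank linearIndependent_weyl (by
    rw [Module.finrank_matrix, Fintype.card_prod, Module.finrank_self, mul_one])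

@[simp]
theorem coe_weylBasis : ⇑(weylBasis d n) = weyl :=
  coe_basisOfLinearIndependentOfCardEqFinrank _ _

theorem smul_weyl_eq_smul_weyl {a b : ℂ} (ha : a ≠ 0) {v w : PhaseSpace d n}
    (h : a • weyl v = b • weyl w) : a = b ∧ v = w := by
  have coords := congrArg (weylBasis d n).repr h
  simp only [← coe_weylBasis, map_smul, Module.Basis.repr_self, Finsupp.smul_single', mul_one,
    Finsupp.single_eq_single_iff] at coords
  rcases coords with ⟨hvw, hab⟩ | ⟨ha', -⟩
  · exact ⟨hab, hvw⟩
  · exact absurd ha' ha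

theorem eq_of_unitaryConj_weyl_eq_smul {U : unitaryGroup (Fin n → ZMod d) ℂ}
    {v w a : PhaseSpace d n} {z z' : ℂ} (hz : z ≠ 0) (hv : unitaryConj U (weyl v) = z • weyl a)
    (hw : unitaryConj U (weyl w) = z' • weyl a) : v = w := by
  have smul_eq : z • weyl w = z' • weyl v :=
    (EquivLike.injective (unitaryConj U)) (by rw [map_smul, map_smul, hv, hw, smul_comm])
  exact (smul_weyl_eq_smul_weyl hz smul_eq).2.symm

theorem repr_weyl_mul_mul_weyl_neg (M : Mat d n) (w v : PhaseSpace d n) :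
    (weylBasis d n).repr (weyl w * M * weyl (-w)) v =
      stdAddChar (sympForm d n w v) * (weylBasis d n).repr M v := by
  let coord := (weylBasis d n).coord v
  suffices coord ∘ₗ LinearMap.mulLeftRight ℂ (weyl w, weyl (-w)) =
      (stdAddChar (sympForm d n w v) : ℂ) • coord from LinearMap.congr_fun this M
  refine (weylBasis d n).ext fun u => ?_
  have conj_weyl : weyl w * weyl u * weyl (-w) = (stdAddChar (sympForm d n w u) : ℂ) • weyl u := by
    rw [weyl_mul_weyl_comm, smul_mul_assoc, mul_assoc, weyl_mul_weyl_neg, mul_one]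
  rw [LinearMap.comp_apply, LinearMap.mulLeftRight_apply, coe_weylBasis, conj_weyl, map_smul,
    LinearMap.smul_apply, Module.Basis.coord_apply, ← coe_weylBasis, Module.Basis.repr_self]
  rcases eq_or_ne u v with rfl | huv
  · rfl
  · simp [huv.symm]

end WeylBasis

section ProjectiveCommutation

/-- Two elements of a complex algebra commute projectively if they commute up to a nonzero
scalar. -/
def ProjCommute {A : Type*} [Mul A] [SMul ℂ A] (a b : A) : Prop :=
  ∃ z : ℂ, z ≠ 0 ∧ a * b = z • (b * a)

namespace ProjCommute

variable {A : Type*} [Ring A] [Algebra ℂ A] {a b : A}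

protected theorem symm (h : ProjCommute a b) : ProjCommute b a := by
  obtain ⟨z, hz, hab⟩ := h
  exact ⟨z⁻¹, inv_ne_zero hz, by rw [hab, inv_smul_smul₀ hz]⟩

theorem smul_left (h : ProjCommute a b) (c : ℂ) : ProjCommute (c • a) b := by
  obtain ⟨z, hz, hab⟩ := h
  exact ⟨z, hz, by rw [smul_mul_assoc, hab, mul_smul_comm, smul_comm]⟩

protected theorem map {A' F : Type*} [Ring A'] [Algebra ℂ A'] [FunLike F A A']
    [AlgHomClass F ℂ A A'] (f : F) (h : ProjCommute a b) : ProjCommute (f a) (f b) := by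
  obtain ⟨z, hz, hab⟩ := h
  exact ⟨z, hz, by rw [← map_mul, hab, map_smul, map_mul]⟩

end ProjCommute

open ZMod (stdAddChar)

variable {d n : ℕ} [Fact d.Prime] [NeZero (2 : ZMod d)]

theorem projCommute_weyl_weyl (v w : PhaseSpace d n) : ProjCommute (weyl v) (weyl w) :=
  ⟨_, stdAddChar_ne_zero _, weyl_mul_weyl_comm v w⟩

-- Comparing coefficients in the Weyl basis: any two points `u`, `v` of the support of `M` satisfy
-- `sympForm w u = sympForm w v` for all `w`.
theorem exists_eq_smul_weyl_of_projCommute {M : Mat d n} (hM : ∀ w, ProjCommute M (weyl w)) :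
    ∃ (m : ℂ) (u : PhaseSpace d n), M = m • weyl u := by
  rcases eq_or_ne M 0 with rfl | hM0
  · exact ⟨0, 0, (zero_smul _ _).symm⟩
  let coeff := (weylBasis d n).repr M
  obtain ⟨u, hu⟩ : ∃ u, coeff u ≠ 0 := by
    by_contra! h
    exact hM0 ((weylBasis d n).repr.map_eq_zero_iff.1 (Finsupp.ext h))
  have coeff_eq_zero (v : PhaseSpace d n) (hvu : v ≠ u) : coeff v = 0 := by
    by_contra hv
    refine hvu (sub_eq_zero.1 (sympForm_nondegenerate.2 (v - u) fun w => ?_))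
    obtain ⟨z, hz0, hz⟩ := hM w
    have M_eq : M = z • (weyl w * M * weyl (-w)) := by
      rw [← smul_mul_assoc, ← hz, mul_assoc, weyl_mul_weyl_neg, mul_one]
    have phase_eq (x : PhaseSpace d n) (hx : coeff x ≠ 0) :
        1 = z * stdAddChar (sympForm d n w x) := by
      have coords := congrArg (fun N => (weylBasis d n).repr N x) M_eq
      simp only [map_smul, Finsupp.smul_apply, repr_weyl_mul_mul_weyl_neg, smul_eq_mul] at coords
      exact mul_right_cancel₀ hx (by rwa [one_mul, mul_assoc])
    rw [map_sub, sub_eq_zero]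
    exact ZMod.injective_stdAddChar
      (mul_left_cancel₀ hz0 ((phase_eq v hv).symm.trans (phase_eq u hu)))
  refine ⟨coeff u, u, ?_⟩
  rw [← coe_weylBasis]
  nth_rw 1 [← (weylBasis d n).sum_repr M]
  exact Finset.sum_eq_single_of_mem u (Finset.mem_univ u) fun v _ hvu => by
    rw [show (weylBasis d n).repr M v = 0 from coeff_eq_zero v hvu, zero_smul]

theorem mem_pauli_of_projCommute {M : Mat d n} (hM : ∀ w, ProjCommute M (weyl w))
    (hMd : M ^ d = 1) : M ∈ Pauli d n := by
  obtain ⟨m, u, rfl⟩ := exists_eq_smul_weyl_of_projCommute hM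
  rw [smul_pow, weyl_pow_card] at hMd
  have hm : m ^ d = 1 := by simpa using congrFun (congrFun hMd 0) 0
  obtain ⟨c, rfl⟩ := exists_stdAddChar_eq_of_pow_eq_one hm
  exact stdAddChar_smul_weyl_mem_pauli c u

end ProjectiveCommutation

section StoneVonNeumann

open ZMod (stdAddChar)

variable {d n : ℕ} [Fact d.Prime] [NeZero (2 : ZMod d)]

theorem exists_algEquiv_apply_weyl_eq {R : PhaseSpace d n → Mat d n} (hR0 : R 0 = 1)
    (hR : ∀ v w, R v * R w = (stdAddChar (2⁻¹ * sympForm d n v w) : ℂ) • R (v + w)) :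
    ∃ f : Mat d n ≃ₐ[ℂ] Mat d n, ∀ v, f (weyl v) = R v := by
  let φ := (weylBasis d n).constr ℂ R
  have φ_weyl (v) : φ (weyl v) = R v := by
    simpa only [coe_weylBasis] using (weylBasis d n).constr_basis ℂ R v
  have φ_mul : ∀ M N, φ (M * N) = φ M * φ N := by
    refine (LinearMap.map_mul_iff φ).2 ((weylBasis d n).ext fun v =>
      (weylBasis d n).ext fun w => ?_)
    simp [φ_weyl, weyl_mul_weyl, hR]
  let f := AlgHom.ofLinearMap φ (by rw [← weyl_zero, φ_weyl, hR0, weyl_zero]) φ_mul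
  have f_injective : Function.Injective f := RingHom.injective f.toRingHom
  exact ⟨AlgEquiv.ofBijective f
    ⟨f_injective, (LinearMap.injective_iff_surjective (f := f.toLinearMap)).1 f_injective⟩, φ_weyl⟩

theorem exists_unitaryConj_weyl_eq {R : PhaseSpace d n → Mat d n} (hR0 : R 0 = 1)
    (hR : ∀ v w, R v * R w = (stdAddChar (2⁻¹ * sympForm d n v w) : ℂ) • R (v + w))
    (hR_star : ∀ v, star (R v) = R (-v)) :
    ∃ U : unitaryGroup (Fin n → ZMod d) ℂ, ∀ v, unitaryConj U (weyl v) = R v := by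
  obtain ⟨f, hf⟩ := exists_algEquiv_apply_weyl_eq hR0 hR
  have f_star (M) : f (star M) = star (f M) := by
    let starₗ := (starLinearEquiv ℂ (A := Mat d n)).toLinearMap
    suffices f.toLinearMap ∘ₛₗ starₗ = starₗ ∘ₛₗ f.toLinearMap from LinearMap.congr_fun this M
    refine (weylBasis d n).ext fun v => ?_
    simp [starₗ, star_weyl, hf, hR_star]
  obtain ⟨U, hU⟩ := exists_unitaryConj_eq (StarAlgEquiv.ofAlgEquiv f f_star)
  exact ⟨U, fun v => (DFunLike.congr_fun hU (weyl v)).trans (hf v)⟩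

theorem exists_unitaryConj_weyl_eq_of_isometry {g : PhaseSpace d n →ₗ[ZMod d] PhaseSpace d n}
    (hg : ∀ v w, sympForm d n (g v) (g w) = sympForm d n v w)
    (l : PhaseSpace d n →ₗ[ZMod d] ZMod d) :
    ∃ U : unitaryGroup (Fin n → ZMod d) ℂ,
      ∀ v, unitaryConj U (weyl v) = (stdAddChar (l v) : ℂ) • weyl (g v) := by
  refine exists_unitaryConj_weyl_eq ?_ (fun v w => ?_) fun v => ?_
  · rw [map_zero l, map_zero g, AddChar.map_zero_eq_one, one_smul, weyl_zero]
  · rw [smul_mul_smul_comm, weyl_mul_weyl, hg, map_add l, map_add g, AddChar.map_add_eq_mul,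
      smul_comm]
  · rw [star_smul, star_stdAddChar, star_weyl, map_neg l, map_neg g]

end StoneVonNeumann

section Clifford

open ZMod (stdAddChar)

variable {d n : ℕ}

theorem mul_mem_clifford [NeZero d] {C D : Mat d n} (hC : C ∈ Clifford d n)
    (hD : D ∈ Clifford d n) : C * D ∈ Clifford d n := by
  refine ⟨mul_mem hC.1 hD.1, fun P hP => ?_⟩
  simpa only [conjTranspose_mul, mul_assoc] using hC.2 _ (hD.2 P hP)

theorem mul_mem_third [NeZero d] {G C : Mat d n} (hG : G ∈ Third d n) (hC : C ∈ Clifford d n) :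
    G * C ∈ Third d n := by
  refine ⟨mul_mem hG.1 hC.1, fun P hP => ?_⟩
  simpa only [conjTranspose_mul, mul_assoc] using hG.2 _ (hC.2 P hP)

theorem mem_clifford_of_unitaryConj_weyl_mem_pauli [NeZero d]
    {U : unitaryGroup (Fin n → ZMod d) ℂ}
    (hU : ∀ v : PhaseSpace d n, unitaryConj U (weyl v) ∈ Pauli d n) :
    (U : Mat d n) ∈ Clifford d n := by
  refine ⟨U.2, fun P hP => ?_⟩
  obtain ⟨c, v, rfl⟩ := mem_pauli_iff.1 hP
  obtain ⟨c', w, hw⟩ := mem_pauli_iff.1 (hU v)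
  change unitaryConj U _ ∈ _
  rw [map_smul, hw, smul_smul, ← AddChar.map_add_eq_mul]
  exact stdAddChar_smul_weyl_mem_pauli _ _

variable [Fact d.Prime] [NeZero (2 : ZMod d)]

theorem exists_linearMap_unitaryConj_weyl_eq {M : Type*} [AddCommGroup M] [Module (ZMod d) M]
    {ι : M →ₗ[ZMod d] PhaseSpace d n} {U : unitaryGroup (Fin n → ZMod d) ℂ}
    (hU : ∀ m, unitaryConj U (weyl (ι m)) ∈ Pauli d n) :
    ∃ (c : M →ₗ[ZMod d] ZMod d) (a : M →ₗ[ZMod d] PhaseSpace d n),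
      (∀ m, unitaryConj U (weyl (ι m)) = (stdAddChar (c m) : ℂ) • weyl (a m)) ∧
      ∀ m m', sympForm d n (a m) (a m') = sympForm d n (ι m) (ι m') := by
  choose c a hca using fun m => mem_pauli_iff.1 (hU m)
  have isometry (m m') : sympForm d n (a m) (a m') = sympForm d n (ι m) (ι m') := by
    have comm_ι := congrArg (unitaryConj U) (weyl_mul_weyl_comm (ι m) (ι m'))
    have comm_a : unitaryConj U (weyl (ι m)) * unitaryConj U (weyl (ι m')) =
        (stdAddChar (sympForm d n (a m) (a m')) : ℂ) •
          (unitaryConj U (weyl (ι m')) * unitaryConj U (weyl (ι m))) := by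
      rw [hca, hca, smul_mul_smul_comm, smul_mul_smul_comm, weyl_mul_weyl_comm, smul_comm,
        mul_comm (stdAddChar (c m'))]
    rw [map_mul, map_smul, map_mul, comm_a] at comm_ι
    have ne_zero := (((isUnit_weyl (ι m')).map (unitaryConj U)).mul
      ((isUnit_weyl (ι m)).map (unitaryConj U))).ne_zero
    exact ZMod.injective_stdAddChar (smul_left_injective ℂ ne_zero comm_ι)
  have add (m m') : (stdAddChar (c (m + m')) : ℂ) = stdAddChar (c m + c m') ∧
      a (m + m') = a m + a m' := by
    refine smul_weyl_eq_smul_weyl (stdAddChar_ne_zero _) (smul_right_injective _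
      (stdAddChar_ne_zero (2⁻¹ * sympForm d n (ι m) (ι m'))) ?_)
    have mul := congrArg (unitaryConj U) (weyl_mul_weyl (ι m) (ι m'))
    rw [map_mul, map_smul, ← map_add ι, hca, hca, hca, smul_mul_smul_comm, weyl_mul_weyl,
      isometry, ← AddChar.map_add_eq_mul, smul_comm] at mul
    exact mul.symm
  refine ⟨(AddMonoidHom.mk' c fun m m' => ZMod.injective_stdAddChar (add m m').1).toZModLinearMap d,
    (AddMonoidHom.mk' a fun m m' => (add m m').2).toZModLinearMap d, hca, isometry⟩

theorem exists_isometry_of_mem_clifford {U : unitaryGroup (Fin n → ZMod d) ℂ}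
    (hU : (U : Mat d n) ∈ Clifford d n) :
    ∃ (c : PhaseSpace d n →ₗ[ZMod d] ZMod d) (S : PhaseSpace d n ≃ₗ[ZMod d] PhaseSpace d n),
      (∀ v, unitaryConj U (weyl v) = (stdAddChar (c v) : ℂ) • weyl (S v)) ∧
      ∀ v w, sympForm d n (S v) (S w) = sympForm d n v w := by
  have mem_pauli (v : PhaseSpace d n) : unitaryConj U (weyl (LinearMap.id (R := ZMod d) v)) ∈
      Pauli d n := hU.2 _ (weyl_mem_pauli v)
  obtain ⟨c, S, hcS, hS⟩ := exists_linearMap_unitaryConj_weyl_eq mem_pauli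
  exact ⟨c, LinearEquiv.ofInjectiveEndo S (injective_of_apply_eq_sympForm hS), hcS, hS⟩

theorem star_mem_clifford {C : Mat d n} (hC : C ∈ Clifford d n) : star C ∈ Clifford d n := by
  lift C to unitaryGroup (Fin n → ZMod d) ℂ using hC.1 with U
  obtain ⟨c, S, hcS, -⟩ := exists_isometry_of_mem_clifford hC
  refine mem_clifford_of_unitaryConj_weyl_mem_pauli (U := star U) fun v => ?_
  refine mem_pauli_iff.2 ⟨-c (S.symm v), S.symm v, ?_⟩
  rw [← unitaryConj_symm, StarAlgEquiv.symm_apply_eq, map_smul, hcS, smul_smul,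
    ← AddChar.map_add_eq_mul, neg_add_cancel, AddChar.map_zero_eq_one, one_smul, S.apply_symm_apply]

theorem mul_mem_third_of_mem_clifford {C G : Mat d n} (hC : C ∈ Clifford d n)
    (hG : G ∈ Third d n) : C * G ∈ Third d n := by
  refine ⟨mul_mem hC.1 hG.1, fun P hP => ?_⟩
  simpa only [conjTranspose_mul, mul_assoc, star_eq_conjTranspose] using
    mul_mem_clifford hC (mul_mem_clifford (hG.2 P hP) (star_mem_clifford hC))

theorem exists_mem_clifford_unitaryConj_weyl_eq {g : PhaseSpace d n →ₗ[ZMod d] PhaseSpace d n}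
    (hg : ∀ v w, sympForm d n (g v) (g w) = sympForm d n v w)
    (l : PhaseSpace d n →ₗ[ZMod d] ZMod d) :
    ∃ U : unitaryGroup (Fin n → ZMod d) ℂ, (U : Mat d n) ∈ Clifford d n ∧
      ∀ v, unitaryConj U (weyl v) = (stdAddChar (l v) : ℂ) • weyl (g v) := by
  obtain ⟨U, hU⟩ := exists_unitaryConj_weyl_eq_of_isometry hg l
  refine ⟨U, mem_clifford_of_unitaryConj_weyl_mem_pauli fun v => ?_, hU⟩
  rw [hU]
  exact stdAddChar_smul_weyl_mem_pauli _ _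

end Clifford

section SemiClifford

open ZMod (stdAddChar)

variable {d n : ℕ} [Fact d.Prime] [NeZero (2 : ZMod d)]

theorem semiClifford_of_isotropic {G : unitaryGroup (Fin n → ZMod d) ℂ}
    (hG : (G : Mat d n) ∈ Third d n) {ι : (Fin n → ZMod d) →ₗ[ZMod d] PhaseSpace d n}
    (hι : Function.Injective ι) (hιB : ∀ p p', sympForm d n (ι p) (ι p') = 0)
    (hGι : ∀ p, (unitaryConj G).symm (weyl (ι p)) ∈ Pauli d n) :
    SemiClifford d n (G : Mat d n) := by
  obtain ⟨c, a, hca, ha⟩ :=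
    exists_linearMap_unitaryConj_weyl_eq (U := star G) (by simpa only [unitaryConj_symm] using hGι)
  have a_injective : Function.Injective a := by
    refine (injective_iff_map_eq_zero a).2 fun p hp => (injective_iff_map_eq_zero ι).1 hι p ?_
    refine eq_of_unitaryConj_weyl_eq_smul (U := star G) (z' := 1) (stdAddChar_ne_zero (c p))
      (hca p) ?_
    rw [hp, weyl_zero, map_one, one_smul]
  obtain ⟨g, hg, hgι⟩ := exists_isometry_extending_isotropic isAlt_sympForm
    sympForm_nondegenerate hι hιB
  obtain ⟨h, hh, hha⟩ := exists_isometry_extending_isotropic isAlt_sympForm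
    sympForm_nondegenerate a_injective fun p p' => (ha p p').trans (hιB p p')
  obtain ⟨W, hW, hWg⟩ := exists_mem_clifford_unitaryConj_weyl_eq hg 0
  obtain ⟨U, hU, hUh⟩ := exists_mem_clifford_unitaryConj_weyl_eq hh (c ∘ₗ LinearMap.fst _ _ _)
  have conj_U (p) : unitaryConj U (weyl (p, 0)) = (unitaryConj G).symm (weyl (ι p)) := by
    rw [hUh, hha, unitaryConj_symm, hca, LinearMap.comp_apply, LinearMap.fst_apply]
  have conj_W (p) : unitaryConj W (weyl (p, 0)) = weyl (ι p) := by
    rw [hWg, hgι, LinearMap.zero_apply, AddChar.map_zero_eq_one, one_smul]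
  let D := star W * G * U
  have conj_D (p) : unitaryConj D (weyl (p, 0)) = weyl (p, 0) := by
    rw [unitaryConj_mul_apply, unitaryConj_mul_apply, conj_U, StarAlgEquiv.apply_symm_apply,
      ← conj_W, ← unitaryConj_symm, StarAlgEquiv.symm_apply_apply]
  refine ⟨W, hW, star U, star_mem_clifford hU, D,
    mul_mem_third (mul_mem_third_of_mem_clifford (star_mem_clifford hW) hG) hU,
    isDiag_of_commute_weyl fun p => ?_, ?_⟩
  · rw [Commute, SemiconjBy, ← unitaryConj_mul_self, conj_D]
  · refine congrArg Subtype.val (?_ : G = W * D * star U)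
    simp [D, Unitary.star_eq_inv, mul_assoc]

end SemiClifford

section Implements

variable {d n : ℕ}

/-- A gate implements a map of phase space if conjugating by it permutes the Weyl operators, up to
phases, by that map. -/
def Implements [NeZero d] (C : Mat d n) (S : PhaseSpace d n → PhaseSpace d n) : Prop :=
  ∀ v, ∃ z : ℂ, z ≠ 0 ∧ C * weyl v = z • (weyl (S v) * C)

namespace Implements

variable {S T : PhaseSpace d n → PhaseSpace d n}

section

variable [NeZero d] {C D : Mat d n}

protected theorem mul (hC : Implements C S) (hD : Implements D T) :
    Implements (C * D) (S ∘ T) := fun v => by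
  obtain ⟨z, hz, hD⟩ := hD v
  obtain ⟨z', hz', hC⟩ := hC (T v)
  refine ⟨z * z', mul_ne_zero hz hz', ?_⟩
  rw [mul_assoc, hD, mul_smul_comm, ← mul_assoc, hC, smul_mul_assoc, smul_smul, mul_assoc,
    Function.comp_apply]

protected theorem smul (hC : Implements C S) (z : ℂ) : Implements (z • C) S := fun v => by
  obtain ⟨z', hz', hC⟩ := hC v
  exact ⟨z', hz', by rw [smul_mul_assoc, hC, mul_smul_comm, smul_comm]⟩

end

variable [Fact d.Prime] [NeZero (2 : ZMod d)] {C : Mat d n}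

theorem apply_eq (hC : Implements C S) (hu : IsUnit C) {v w : PhaseSpace d n} {z : ℂ}
    (hw : C * weyl v = z • (weyl w * C)) : S v = w := by
  obtain ⟨z', hz', hC⟩ := hC v
  have weyl_eq : z' • weyl (S v) = z • weyl w :=
    hu.mul_left_injective (by simpa only [smul_mul_assoc] using hC.symm.trans hw)
  exact (smul_weyl_eq_smul_weyl hz' weyl_eq).2

theorem apply_eq_self_iff (hC : Implements C S) (hu : IsUnit C) {v : PhaseSpace d n} :
    S v = v ↔ ProjCommute C (weyl v) := by
  refine ⟨fun hv => ?_, fun ⟨z, _, h⟩ => hC.apply_eq hu h⟩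
  simpa only [hv] using! hC v

theorem eq (hC : Implements C S) (hT : Implements C T) (hu : IsUnit C) : S = T :=
  funext fun v => by
    obtain ⟨z, -, hz⟩ := hT v
    exact hC.apply_eq hu hz

end Implements

end Implements

section ThirdLevel

open ZMod (stdAddChar)

variable {d n : ℕ} [Fact d.Prime] [NeZero (2 : ZMod d)]

theorem exists_implements_isometry_of_mem_clifford {C : Mat d n} (hC : C ∈ Clifford d n) :
    ∃ S : PhaseSpace d n ≃ₗ[ZMod d] PhaseSpace d n,
      (∀ v w, sympForm d n (S v) (S w) = sympForm d n v w) ∧ Implements C S := by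
  lift C to unitaryGroup (Fin n → ZMod d) ℂ using hC.1 with U
  obtain ⟨c, S, hcS, hS⟩ := exists_isometry_of_mem_clifford hC
  refine ⟨S, hS, fun v => ⟨stdAddChar (c v), stdAddChar_ne_zero _, ?_⟩⟩
  rw [← smul_mul_assoc, ← hcS, unitaryConj_mul_self]

theorem exists_monoidHom_of_mem_third {G : unitaryGroup (Fin n → ZMod d) ℂ}
    (hG : (G : Mat d n) ∈ Third d n) :
    ∃ σ : Multiplicative (PhaseSpace d n) →* (PhaseSpace d n ≃ₗ[ZMod d] PhaseSpace d n),
      (∀ v x y, sympForm d n (σ v x) (σ v y) = sympForm d n x y) ∧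
      ∀ v y, σ (.ofAdd v) y = y ↔ ProjCommute (unitaryConj G (weyl v)) (weyl y) := by
  have exists_implements (v) :=
    exists_implements_isometry_of_mem_clifford (hG.2 (weyl v) (weyl_mem_pauli v))
  choose S hS hGS using exists_implements
  replace hGS (v) : Implements (unitaryConj G (weyl v)) (S v) := hGS v
  have isUnit_conj (v : PhaseSpace d n) : IsUnit (unitaryConj G (weyl v)) :=
    (isUnit_weyl v).map (unitaryConj G)
  have S_add (v w) : S (v + w) = S v * S w := by
    have conj_mul : unitaryConj G (weyl v) * unitaryConj G (weyl w) =
        (stdAddChar (2⁻¹ * sympForm d n v w) : ℂ) • unitaryConj G (weyl (v + w)) := by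
      rw [← map_mul, weyl_mul_weyl, map_smul]
    refine LinearEquiv.ext (congrFun (Implements.eq ?_ ((hGS v).mul (hGS w))
      ((isUnit_conj v).mul (isUnit_conj w))))
    rw [conj_mul]
    exact (hGS (v + w)).smul _
  exact ⟨MonoidHom.mk' (fun v => S v.toAdd) fun v w => S_add v.toAdd w.toAdd, fun v => hS v.toAdd,
    fun v y => (hGS v).apply_eq_self_iff (isUnit_conj v)⟩

theorem unitaryConj_weyl_mem_pauli_iff {U : unitaryGroup (Fin n → ZMod d) ℂ}
    {v : PhaseSpace d n} :
    unitaryConj U (weyl v) ∈ Pauli d n ↔ ∀ w, ProjCommute (unitaryConj U (weyl v)) (weyl w) := by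
  refine ⟨fun hv w => ?_, fun hv => mem_pauli_of_projCommute hv ?_⟩
  · obtain ⟨c, u, hu⟩ := mem_pauli_iff.1 hv
    rw [hu]
    exact (projCommute_weyl_weyl u w).smul_left _
  · rw [← map_pow, weyl_pow_card, map_one]

theorem symm_unitaryConj_weyl_mem_pauli_iff {U : unitaryGroup (Fin n → ZMod d) ℂ}
    {y : PhaseSpace d n} :
    (unitaryConj U).symm (weyl y) ∈ Pauli d n ↔
      ∀ v, ProjCommute (unitaryConj U (weyl v)) (weyl y) := by
  rw [unitaryConj_symm, unitaryConj_weyl_mem_pauli_iff, ← unitaryConj_symm]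
  refine forall_congr' fun v => ⟨fun h => ?_, fun h => ?_⟩
  · simpa only [StarAlgEquiv.apply_symm_apply] using (h.map (unitaryConj U)).symm
  · simpa only [StarAlgEquiv.symm_apply_apply] using (h.map (unitaryConj U).symm).symm

theorem natCard_setOf_unitaryConj_weyl_mem_pauli_le (U : unitaryGroup (Fin n → ZMod d) ℂ) :
    Nat.card {v : PhaseSpace d n | unitaryConj U (weyl v) ∈ Pauli d n} ≤
      Nat.card {y : PhaseSpace d n | (unitaryConj U).symm (weyl y) ∈ Pauli d n} := by
  choose c a hca using fun v : {v : PhaseSpace d n | unitaryConj U (weyl v) ∈ Pauli d n} =>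
    mem_pauli_iff.1 v.2
  have symm_mem (v) : (unitaryConj U).symm (weyl (a v)) ∈ Pauli d n := by
    refine mem_pauli_iff.2 ⟨-c v, v, ?_⟩
    rw [StarAlgEquiv.symm_apply_eq, map_smul, hca, smul_smul, ← AddChar.map_add_eq_mul,
      neg_add_cancel, AddChar.map_zero_eq_one, one_smul]
  refine Nat.card_le_card_of_injective (fun v => ⟨a v, symm_mem v⟩) fun v w hvw => Subtype.ext ?_
  have a_eq : a v = a w := congrArg Subtype.val hvw
  exact eq_of_unitaryConj_weyl_eq_smul (stdAddChar_ne_zero _) (hca v) (a_eq ▸ hca w)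

theorem exists_subgroup_of_mem_third {G : unitaryGroup (Fin n → ZMod d) ℂ}
    (hG : (G : Mat d n) ∈ Third d n) :
    ∃ H : Subgroup (PhaseSpace d n ≃ₗ[ZMod d] PhaseSpace d n), IsMulCommutative H ∧ IsPGroup d H ∧
      IsInvariantSymplectic H (sympForm d n) ∧
      d ^ (2 * n) ≤ Nat.card H * Nat.card (MulAction.fixedPoints H (PhaseSpace d n)) ∧
      ∀ y ∈ MulAction.fixedPoints H (PhaseSpace d n),
        (unitaryConj G).symm (weyl y) ∈ Pauli d n := by
  obtain ⟨σ, hσ, σ_apply_eq_iff⟩ := exists_monoidHom_of_mem_third hG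
  have mem_fixedPoints (y) : y ∈ MulAction.fixedPoints σ.range (PhaseSpace d n) ↔
      (unitaryConj G).symm (weyl y) ∈ Pauli d n := by
    rw [symm_unitaryConj_weyl_mem_pauli_iff]
    exact ⟨fun hy v => (σ_apply_eq_iff v y).1 (hy ⟨_, .ofAdd v, rfl⟩),
      fun hy ⟨_, v, hv⟩ => hv ▸ (σ_apply_eq_iff v.toAdd y).2 (hy v.toAdd)⟩
  have mem_ker (v) : v ∈ σ.ker ↔ unitaryConj G (weyl v.toAdd) ∈ Pauli d n := by
    rw [MonoidHom.mem_ker, unitaryConj_weyl_mem_pauli_iff, LinearEquiv.ext_iff]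
    exact forall_congr' fun y => σ_apply_eq_iff v.toAdd y
  have card_phaseSpace : Nat.card (Multiplicative (PhaseSpace d n)) = d ^ (2 * n) := by
    rw [Nat.card_congr Multiplicative.toAdd, Module.natCard_eq_pow_finrank (K := ZMod d),
      finrank_phaseSpace, Nat.card_zmod]
  refine ⟨σ.range, inferInstance, ?_, ⟨isAlt_sympForm, sympForm_nondegenerate, ?_⟩, ?_,
    fun y hy => (mem_fixedPoints y).1 hy⟩
  · exact (IsPGroup.of_card card_phaseSpace).of_surjective σ.rangeRestrict
      σ.rangeRestrict_surjective
  · rintro ⟨_, v, rfl⟩ x y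
    exact hσ v x y
  · have card_ker_le : Nat.card σ.ker ≤
        Nat.card (MulAction.fixedPoints σ.range (PhaseSpace d n)) := by
      rw [Set.ext mem_fixedPoints]
      refine le_of_eq_of_le (Nat.card_congr ?_) (natCard_setOf_unitaryConj_weyl_mem_pauli_le G)
      exact Multiplicative.toAdd.subtypeEquiv mem_ker
    calc d ^ (2 * n) = Nat.card σ.range * Nat.card σ.ker := by
          rw [← card_phaseSpace, mul_comm, ← Subgroup.index_ker, Subgroup.card_mul_index]
      _ ≤ _ := Nat.mul_le_mul_left _ card_ker_le

theorem semiClifford_of_mem_third {G : unitaryGroup (Fin 2 → ZMod d) ℂ}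
    (hG : (G : Mat d 2) ∈ Third d 2) : SemiClifford d 2 (G : Mat d 2) := by
  obtain ⟨H, _, isPGroup, isInvariant, card_le, fixed_mem⟩ := exists_subgroup_of_mem_third hG
  obtain ⟨x, hx, y, hy, independent, isotropic⟩ := isInvariant.exists_isotropic_fixed_pair
    (NeZero.ne 2) finrank_phaseSpace isPGroup (by rwa [Nat.card_zmod])
  refine semiClifford_of_isotropic hG (ι := Fintype.linearCombination (ZMod d) ![x, y])
    (linearIndependent_iff_injective_fintypeLinearCombination.1 independent) (fun p p' => ?_)
    fun p => fixed_mem _ fun h => ?_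
  · have isotropic_symm : sympForm d 2 y x = 0 := by
      rw [← isAlt_sympForm.neg_eq, isotropic, neg_zero]
    simp [Fintype.linearCombination_apply, Fin.sum_univ_two, isAlt_sympForm _, isotropic,
      isotropic_symm]
  · refine smul_eq_of_mem_span_pair (F := ZMod d) (hx h) (hy h) ?_
    rw [Fintype.linearCombination_apply, Fin.sum_univ_two]
    exact Submodule.mem_span_pair.2 ⟨_, _, rfl⟩

end ThirdLevel

/-- **Main theorem.** For every odd prime `d`, every two-qudit gate of the third level
of the Clifford hierarchy is semi-Clifford. -/
theorem stmt0 (d : ℕ) [NeZero d] (hp : Nat.Prime d) (hodd : Odd d)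
    (G : Mat d 2) (hG : G ∈ Third d 2) :
    ∃ C₁ ∈ Clifford d 2, ∃ C₂ ∈ Clifford d 2, ∃ D ∈ Third d 2, D.IsDiag ∧ G = C₁ * D * C₂ := by
  have : Fact d.Prime := ⟨hp⟩
  have : NeZero (2 : ZMod d) := ⟨fun h => hodd.not_two_dvd_nat
    ((Nat.prime_dvd_prime_iff_eq hp Nat.prime_two).1
      ((ZMod.natCast_eq_zero_iff 2 d).1 (mod_cast h)) ▸ dvd_rfl)⟩
  lift G to unitaryGroup (Fin 2 → ZMod d) ℂ using hG.1
  exact semiClifford_of_mem_third hG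

end
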